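/- Let ρ and σ be positive definite d×d density matrices, let α ∈ (1,∞) and z ∈ (0,1). Then the minimum of F_{α,z}(ρ, UσU*) over all d×d unitary matrices U equals F_α^C(λ↓(ρ), λ↓(σ)), and this minimum is attained by some unitary U. -/

import Mathlib

open Matrix
open scoped ComplexOrder

/-- Real power of a (Hermitian) matrix via functional calculus on eigenvalues,
with `(0:ℝ) ^ t = 0` for `t ≠ 0`. Returns `0` on non-Hermitian input. -/
noncomputable def mpow {d : ℕ} (A : Matrix (Fin d) (Fin d) ℂ) (t : ℝ) :
    Matrix (Fin d) (Fin d) ℂ :=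
  if hA : A.IsHermitian then
    (hA.eigenvectorUnitary : Matrix (Fin d) (Fin d) ℂ) *
      Matrix.diagonal (fun i => ((hA.eigenvalues i ^ t : ℝ) : ℂ)) *
      (star (hA.eigenvectorUnitary : Matrix (Fin d) (Fin d) ℂ))
  else 0

/-- The quantum α-z-fidelity
`F_{α,z}(ρ,σ) = (Tr[(σ^{(1-α)/(2z)} ρ^{α/z} σ^{(1-α)/(2z)})^z])^{1/α}`. -/
noncomputable def Faz {d : ℕ} (ρ σ : Matrix (Fin d) (Fin d) ℂ) (α z : ℝ) : ℝ :=
  ((mpow (mpow σ ((1 - α) / (2 * z)) * mpow ρ (α / z) * mpow σ ((1 - α) / (2 * z))) z).trace.re)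
    ^ (1 / α)

/-- The classical α-fidelity `F_α^C(p,q) = (Σ_i p_i^α q_i^{1-α})^{1/α}`. -/
noncomputable def FazC {d : ℕ} (p q : Fin d → ℝ) (α : ℝ) : ℝ :=
  (∑ i, p i ^ α * q i ^ (1 - α)) ^ (1 / α)

/-- The vector `p` rearranged in increasing order. -/
noncomputable def sortUp {d : ℕ} (p : Fin d → ℝ) : Fin d → ℝ :=
  p ∘ Tuple.sort p

/-- The vector `p` rearranged in decreasing order. -/
noncomputable def sortDown {d : ℕ} (p : Fin d → ℝ) : Fin d → ℝ :=
  fun i => sortUp p i.rev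

/-- `λ↑(A)`: the eigenvalues of a Hermitian matrix in increasing order. -/
noncomputable def eigUp {d : ℕ} {A : Matrix (Fin d) (Fin d) ℂ} (hA : A.IsHermitian) :
    Fin d → ℝ := sortUp hA.eigenvalues

/-- `λ↓(A)`: the eigenvalues of a Hermitian matrix in decreasing order. -/
noncomputable def eigDown {d : ℕ} {A : Matrix (Fin d) (Fin d) ℂ} (hA : A.IsHermitian) :
    Fin d → ℝ := sortDown hA.eigenvalues

/-!
Put `A = ρ ^ (α / z)` and `S = σ ^ ((1 - α) / (2 * z))`, and minimise `Tr (S V A V* S) ^ z` over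
the compact group of unitaries `V`. Klein's inequality for the concave function `x ↦ x ^ z` bounds
`Tr Y ^ z` by its tangent at the minimiser `X = S A S` (with `A` replaced by its rotation), so `A`
also minimises the linear functional `Tr (S X ^ (z - 1) S V A V*)` on its unitary orbit. The first
variation then makes `A` commute with `S X ^ (z - 1) S`, and this forces `S` and `A` to commute.
For commuting `S` and `A` the trace is `Tr (ρ ^ α σ ^ (1 - α))`, a bilinear form in the spectra of
`ρ` and `σ` given by a doubly stochastic matrix, and Birkhoff's theorem with the rearrangement
inequality bounds it below by the sum over the decreasingly ordered eigenvalues.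
-/

section StrictlyPositiveRpow

variable {A : Type*} [PartialOrder A] [Ring A] [StarRing A] [TopologicalSpace A]
  [StarOrderedRing A] [Algebra ℝ A] [ContinuousFunctionalCalculus ℝ A IsSelfAdjoint]
  [NonnegSpectrumClass ℝ A] {a s : A}

lemma rpow_two_eq_mul_self (ha : 0 ≤ a) : a ^ (2 : ℝ) = a * a := by
  simpa [pow_two] using CFC.rpow_natCast a 2 ha

lemma rpow_sub_one_mul_self (ha : IsStrictlyPositive a) (t : ℝ) : a ^ (t - 1) * a = a ^ t := by
  nth_rw 2 [← CFC.rpow_one a]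
  rw [← CFC.rpow_add ha.isUnit, sub_add_cancel]

lemma self_mul_rpow_sub_one (ha : IsStrictlyPositive a) (t : ℝ) : a * a ^ (t - 1) = a ^ t := by
  nth_rw 1 [← CFC.rpow_one a]
  rw [← CFC.rpow_add ha.isUnit, add_sub_cancel]

variable [IsTopologicalRing A] [T2Space A]

lemma rpow_rpow_of_isStrictlyPositive (ha : IsStrictlyPositive a) (x y : ℝ) :
    (a ^ x) ^ y = a ^ (x * y) := by
  obtain rfl | hx := eq_or_ne x 0
  · rw [zero_mul, CFC.rpow_zero a, CFC.one_rpow]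
  · exact CFC.rpow_rpow a x y hx

lemma commute_of_commute_rpow {t : ℝ} (ha : IsStrictlyPositive a) (ht : t ≠ 0)
    (h : Commute (a ^ t) s) : Commute a s := by
  rw [← CFC.rpow_rpow_inv a t ht]
  exact h.cfc_nnreal _

lemma commute_of_commute_mul_self (ha : IsStrictlyPositive a) (h : Commute (a * a) s) :
    Commute a s :=
  commute_of_commute_rpow ha two_ne_zero (rpow_two_eq_mul_self ha.nonneg ▸ h)

lemma commute_of_commute_conjugate_rpow_sub_one {z : ℝ} (hz : z ≠ 0)
    (hs : IsStrictlyPositive s) (ha : IsStrictlyPositive a)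
    (h : Commute (s * (s * a * s) ^ (z - 1) * s) a) : Commute s a := by
  have hx : IsStrictlyPositive (s * a * s) :=
    IsStrictlyPositive.conjugate_of_isUnit_of_isSelfAdjoint a s hs.isUnit
  have hpow : Commute ((s * a * s) ^ z) (s * s) := calc
    (s * a * s) ^ z * (s * s) = s * (a * (s * (s * a * s) ^ (z - 1) * s)) * s := by
      rw [← self_mul_rpow_sub_one hx z]; simp only [mul_assoc]
    _ = s * (s * (s * a * s) ^ (z - 1) * s * a) * s := by rw [h.eq]
    _ = s * s * (s * a * s) ^ z := by
      rw [← rpow_sub_one_mul_self hx z]; simp only [mul_assoc]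
  have hxs : s * (a * (s * s) * s) = s * (s * s * a * s) := by
    simpa only [mul_assoc] using (commute_of_commute_rpow hx hz hpow).eq
  exact commute_of_commute_mul_self hs
    (hs.isUnit.mul_right_cancel (hs.isUnit.mul_left_cancel hxs)).symm

lemma conjugate_unitary_rpow {u : A} (hu : u ∈ unitary A) (ha : IsStrictlyPositive a) (t : ℝ) :
    (u * a * star u) ^ t = u * a ^ t * star u := by
  let φ := Unitary.conjStarAlgAut ℝ A ⟨u, hu⟩
  have hφ : Continuous φ := (continuous_const.mul continuous_id).mul continuous_const
  have hpos : 0 ≤ u * a * star u := star_right_conjugate_nonneg ha.nonneg u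
  have hcont : ContinuousOn (fun x : ℝ => x ^ t) (spectrum ℝ a) := fun x hx =>
    (Real.continuousAt_rpow_const x t (.inl (ha.spectrum_pos hx).ne')).continuousWithinAt
  rw [CFC.rpow_eq_cfc_real hpos, CFC.rpow_eq_cfc_real ha.nonneg]
  exact (StarAlgHomClass.map_cfc φ _ a hcont hφ ha.isSelfAdjoint hpos.isSelfAdjoint).symm

end StrictlyPositiveRpow

section CommutingRpow

variable {A : Type*} [PartialOrder A] [NormedRing A] [StarRing A]
  [StarOrderedRing A] [NormedAlgebra ℝ A] [ContinuousFunctionalCalculus ℝ A IsSelfAdjoint]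
  [NonnegSpectrumClass ℝ A] [StarModule ℝ A] {a b s : A}

open NormedSpace

lemma rpow_eq_exp_smul_log (ha : IsStrictlyPositive a) (t : ℝ) :
    a ^ t = exp (t • CFC.log a) := by
  have hpos : ∀ x ∈ spectrum ℝ a, 0 < x := fun x hx => ha.spectrum_pos hx
  rw [CFC.rpow_eq_cfc_real, ← CFC.real_exp_eq_normedSpace_exp (.smul (.all t) .log),
    CFC.log, ← cfc_const_mul t Real.log a (by fun_prop (disch := grind)),
    ← cfc_comp' Real.exp (fun x => t * Real.log x) a (by fun_prop) (by fun_prop (disch := grind))]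
  exact cfc_congr fun x hx => by rw [mul_comm, Real.exp_mul, Real.exp_log (hpos x hx)]

variable [CompleteSpace A]

lemma exp_rpow (ha : IsSelfAdjoint a) (t : ℝ) : exp a ^ t = exp (t • a) := by
  let +nondep : NormedAlgebra ℚ A := .restrictScalars ℚ ℝ A
  have hpos : IsStrictlyPositive (exp a) :=
    IsStrictlyPositive.iff_of_unital.mpr ⟨ha.exp_nonneg, NormedSpace.isUnit_exp a⟩
  rw [rpow_eq_exp_smul_log hpos, CFC.log_exp a]

lemma mul_rpow_of_commute (ha : IsStrictlyPositive a) (hb : IsStrictlyPositive b)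
    (h : Commute a b) (t : ℝ) : (a * b) ^ t = a ^ t * b ^ t := by
  let +nondep : NormedAlgebra ℚ A := .restrictScalars ℚ ℝ A
  have hlog : Commute (CFC.log a) (CFC.log b) := ((h.cfc_real _).symm.cfc_real _).symm
  have hab : a * b = exp (CFC.log a + CFC.log b) := by
    rw [NormedSpace.exp_add_of_commute hlog, CFC.exp_log a, CFC.exp_log b]
  rw [hab, exp_rpow (.add .log .log), smul_add,
    NormedSpace.exp_add_of_commute ((hlog.smul_left t).smul_right t), rpow_eq_exp_smul_log ha,
    rpow_eq_exp_smul_log hb]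

lemma conjugate_rpow_of_commute (hs : IsStrictlyPositive s) (ha : IsStrictlyPositive a)
    (h : Commute s a) (t : ℝ) : (s * a * s) ^ t = s ^ (2 * t) * a ^ t := by
  have hs2 : IsStrictlyPositive (s ^ (2 : ℝ)) := hs.rpow s 2
  rw [mul_assoc, ← h.eq, ← mul_assoc, ← rpow_two_eq_mul_self hs.nonneg,
    mul_rpow_of_commute hs2 ha (h.cfc_nnreal _), rpow_rpow_of_isStrictlyPositive hs]

lemma conjugate_rpow_div_rpow_of_commute (hs : IsStrictlyPositive s) (ha : IsStrictlyPositive a)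
    {p q t : ℝ} (ht : t ≠ 0) (h : Commute (s ^ (p / (2 * t))) (a ^ (q / t))) :
    (s ^ (p / (2 * t)) * a ^ (q / t) * s ^ (p / (2 * t))) ^ t = s ^ p * a ^ q := by
  rw [conjugate_rpow_of_commute (hs.rpow _ _) (ha.rpow _ _) h, rpow_rpow_of_isStrictlyPositive hs,
    rpow_rpow_of_isStrictlyPositive ha, div_mul_cancel₀ _ ht, div_mul_cancel₀ _ (by positivity)]

end CommutingRpow

section ContinuityRpow

variable {A : Type*} [PartialOrder A] [NormedRing A] [StarRing A] [StarOrderedRing A]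
  [NormedAlgebra ℝ A] [IsometricContinuousFunctionalCalculus ℝ A IsSelfAdjoint]
  [NonnegSpectrumClass ℝ A] [ContinuousStar A] [CompleteSpace A]

lemma continuousOn_rpow_const {t : ℝ} (ht : 0 ≤ t) :
    ContinuousOn (fun a : A => a ^ t) (Set.Ici 0) :=
  continuousOn_id.cfc_nnreal_of_mem_nhdsSet (· ^ t) Filter.univ_mem (fun _ ha => ha)
    (NNReal.continuous_rpow_const ht).continuousOn

end ContinuityRpow

section SpectralTrace

open scoped MatrixOrder

variable {n 𝕜 : Type*} [Fintype n] [DecidableEq n] [RCLike 𝕜] {A B : Matrix n n 𝕜}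

/-- The matrix of transition probabilities `|Q i j|²` of a unitary matrix `Q`; it turns a trace
of a product of two functions of Hermitian matrices into a bilinear form in the eigenvalues. -/
def unistochastic (Q : unitaryGroup n 𝕜) : Matrix n n ℝ :=
  .of fun i j => ‖(Q : Matrix n n 𝕜) i j‖ ^ 2

lemma sum_norm_sq_row_eq_one (Q : unitaryGroup n 𝕜) (i : n) :
    ∑ j, ‖(Q : Matrix n n 𝕜) i j‖ ^ 2 = 1 := by
  have h := congr_fun₂ (mem_unitaryGroup_iff.mp Q.2) i i
  simp only [mul_apply, star_apply, RCLike.star_def, RCLike.mul_conj, one_apply_eq] at h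
  exact_mod_cast h

lemma unistochastic_mem_doublyStochastic (Q : unitaryGroup n 𝕜) :
    unistochastic Q ∈ doublyStochastic ℝ n := by
  refine mem_doublyStochastic_iff_sum.mpr ⟨fun i j => sq_nonneg _, sum_norm_sq_row_eq_one Q,
    fun j => ?_⟩
  simpa [unistochastic] using sum_norm_sq_row_eq_one (star Q) j

lemma re_trace_diagonal_mul_conj_diagonal (Q : unitaryGroup n 𝕜) (p q : n → ℝ) :
    RCLike.re (diagonal (RCLike.ofReal ∘ p : n → 𝕜) *
      (Q * diagonal (RCLike.ofReal ∘ q : n → 𝕜) * star (Q : Matrix n n 𝕜))).trace =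
      p ⬝ᵥ unistochastic Q *ᵥ q := by
  simp only [trace, diag_apply, diagonal_mul, mul_apply (M := _ * diagonal _), mul_diagonal,
    star_apply, dotProduct, mulVec, unistochastic, of_apply, Function.comp_apply, map_sum,
    RCLike.re_ofReal_mul, RCLike.star_def]
  refine Finset.sum_congr rfl fun i _ => congr_arg _ (Finset.sum_congr rfl fun j _ => ?_)
  rw [mul_right_comm, RCLike.mul_conj]
  norm_cast

lemma re_trace_cfc_mul_cfc (hA : A.IsHermitian) (hB : B.IsHermitian) (f g : ℝ → ℝ) :
    RCLike.re (cfc f A * cfc g B).trace = (f ∘ hA.eigenvalues) ⬝ᵥ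
      unistochastic (star hA.eigenvectorUnitary * hB.eigenvectorUnitary) *ᵥ
        (g ∘ hB.eigenvalues) := by
  rw [← re_trace_diagonal_mul_conj_diagonal, hA.cfc_eq, hB.cfc_eq, IsHermitian.cfc,
    IsHermitian.cfc, Unitary.conjStarAlgAut_apply, Unitary.conjStarAlgAut_apply, mul_assoc,
    mul_assoc, trace_mul_comm]
  simp only [mul_assoc, Submonoid.coe_mul, star_mul, star_star, Unitary.coe_star]

lemma sum_re_trace_cfc_mul_cfc_nonneg (hA : A.IsHermitian) (hB : B.IsHermitian) {ι : Type*}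
    (s : Finset ι) (f g : ι → ℝ → ℝ)
    (h : ∀ x ∈ spectrum ℝ A, ∀ y ∈ spectrum ℝ B, 0 ≤ ∑ k ∈ s, f k x * g k y) :
    0 ≤ ∑ k ∈ s, RCLike.re (cfc (f k) A * cfc (g k) B).trace := by
  simp only [re_trace_cfc_mul_cfc hA hB, dotProduct, mulVec, Finset.mul_sum, Function.comp_apply]
  rw [Finset.sum_comm]
  refine Finset.sum_nonneg fun i _ => ?_
  rw [Finset.sum_comm]
  refine Finset.sum_nonneg fun j _ => ?_
  simp only [mul_left_comm (f _ _), ← Finset.mul_sum]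
  exact mul_nonneg (sq_nonneg _)
    (h _ (hA.eigenvalues_mem_spectrum_real i) _ (hB.eigenvalues_mem_spectrum_real j))

lemma rpow_le_add_rpow_sub_one_mul {x y z : ℝ} (hx : 0 < x) (hy : 0 ≤ y) (hz : z ∈ Set.Icc 0 1) :
    y ^ z ≤ (1 - z) * x ^ z + z * (x ^ (z - 1) * y) := by
  have hamgm := Real.geom_mean_le_arith_mean2_weighted (sub_nonneg.mpr hz.2) hz.1 hx.le hy
    (sub_add_cancel 1 z)
  calc y ^ z = x ^ (z - 1) * (x ^ (1 - z) * y ^ z) := by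
        rw [← mul_assoc, ← Real.rpow_add hx]; simp
    _ ≤ x ^ (z - 1) * ((1 - z) * x + z * y) := by gcongr
    _ = (1 - z) * x ^ z + z * (x ^ (z - 1) * y) := by
        rw [Real.rpow_sub_one hx.ne']; field_simp

-- Klein's inequality: a tangent-line bound on the spectra passes to the traces.
lemma re_trace_rpow_le (hA : A.PosDef) (hB : B.PosSemidef) {z : ℝ} (hz : z ∈ Set.Icc 0 1) :
    RCLike.re (B ^ z).trace ≤
      (1 - z) * RCLike.re (A ^ z).trace + z * RCLike.re (A ^ (z - 1) * B).trace := by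
  have hB0 : 0 ≤ B := hB.nonneg
  have hA0 : 0 ≤ A := hA.posSemidef.nonneg
  have h := sum_re_trace_cfc_mul_cfc_nonneg hA.isHermitian hB.isHermitian Finset.univ
    ![fun x => x ^ z, fun x => x ^ (z - 1), fun _ => -1]
    ![fun _ => 1 - z, fun y => z * y, fun y => y ^ z] fun x hx y hy => by
      have htangent := rpow_le_add_rpow_sub_one_mul (hA.isStrictlyPositive.spectrum_pos hx)
        (spectrum_nonneg_of_nonneg hB0 hy) hz
      simp only [Fin.sum_univ_three, cons_val]
      linarith
  simp only [Fin.sum_univ_three, cons_val, ← CFC.rpow_eq_cfc_real hA0,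
    ← CFC.rpow_eq_cfc_real hB0, cfc_const_mul_id z B, cfc_const (1 - z) B, cfc_const (-1 : ℝ) A,
    Algebra.algebraMap_eq_smul_one, mul_smul_comm, smul_mul_assoc, mul_one, one_mul, trace_smul,
    RCLike.smul_re] at h
  linarith

lemma monovary_eigenvalues (hA : A.IsHermitian) (hB : B.IsHermitian) :
    Monovary hA.eigenvalues hB.eigenvalues :=
  (hA.eigenvalues₀_antitone.monovary hB.eigenvalues₀_antitone).comp_right _

lemma dotProduct_le_dotProduct_mulVec_of_antivary {f g : n → ℝ} (h : Antivary f g)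
    {M : Matrix n n ℝ} (hM : M ∈ doublyStochastic ℝ n) : f ⬝ᵥ g ≤ f ⬝ᵥ M *ᵥ g := by
  obtain ⟨w, hw, hw1, rfl⟩ := exists_eq_sum_perm_of_mem_doublyStochastic hM
  simp only [sum_mulVec, dotProduct_sum, smul_mulVec, dotProduct_smul, smul_eq_mul]
  calc f ⬝ᵥ g = ∑ π, w π * f ⬝ᵥ g := by rw [← Finset.sum_mul, hw1, one_mul]
    _ ≤ ∑ π, w π * f ⬝ᵥ π.permMatrix ℝ *ᵥ g := by
      gcongr with π
      · exact hw π
      · simpa [dotProduct, permMatrix_mulVec] using h.sum_mul_le_sum_mul_comp_perm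

lemma sum_mul_eigenvalues_le_re_trace_cfc_mul_cfc (hA : A.IsHermitian) (hB : B.IsHermitian)
    {f g : ℝ → ℝ} (hf : MonotoneOn f (spectrum ℝ A)) (hg : AntitoneOn g (spectrum ℝ B)) :
    ∑ i, f (hA.eigenvalues i) * g (hB.eigenvalues i) ≤ RCLike.re (cfc f A * cfc g B).trace := by
  have h : Antivary (f ∘ hA.eigenvalues) (g ∘ hB.eigenvalues) := fun i j hij =>
    hf (hA.eigenvalues_mem_spectrum_real _) (hA.eigenvalues_mem_spectrum_real _) <|
      monovary_eigenvalues hA hB <| lt_of_not_ge fun hle => hij.not_ge <|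
        hg (hB.eigenvalues_mem_spectrum_real _) (hB.eigenvalues_mem_spectrum_real _) hle
  rw [re_trace_cfc_mul_cfc hA hB]
  exact dotProduct_le_dotProduct_mulVec_of_antivary h (unistochastic_mem_doublyStochastic _)

lemma posDef_conjugate_unitary {U : Matrix n n 𝕜} (hU : U ∈ unitaryGroup n 𝕜) (hA : A.PosDef) :
    (U * A * star U).PosDef :=
  (Matrix.IsUnit.posDef_star_right_conjugate_iff (Unitary.isUnit_coe (U := ⟨U, hU⟩))).mpr hA

lemma posDef_rpow (hA : A.PosDef) (t : ℝ) : (A ^ t).PosDef :=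
  isStrictlyPositive_iff_posDef.mp (hA.isStrictlyPositive.rpow A t)

lemma eigenvalues_conjugate_unitary (hA : A.IsHermitian) {U : Matrix n n 𝕜}
    (hU : U ∈ unitaryGroup n 𝕜) (h : (U * A * star U).IsHermitian) :
    h.eigenvalues = hA.eigenvalues := by
  rw [IsHermitian.eigenvalues_eq_eigenvalues_iff, charpoly_mul_comm, ← mul_assoc,
    mem_unitaryGroup_iff'.mp hU, one_mul]

/-- The unitary taking the chosen eigenbasis of `B` to that of `A`, matching the `i`-th largest
eigenvalues; conjugating `B` by it attains the minimum. -/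
noncomputable def eigenbasisAlignment (hA : A.IsHermitian) (hB : B.IsHermitian) :
    unitaryGroup n 𝕜 :=
  hA.eigenvectorUnitary * star hB.eigenvectorUnitary

lemma conjugate_eigenbasisAlignment_cfc (hA : A.IsHermitian) (hB : B.IsHermitian) (g : ℝ → ℝ) :
    eigenbasisAlignment hA hB * cfc g B * star (eigenbasisAlignment hA hB : Matrix n n 𝕜) =
      Unitary.conjStarAlgAut 𝕜 _ hA.eigenvectorUnitary
        (diagonal (RCLike.ofReal ∘ g ∘ hB.eigenvalues)) := by
  rw [← Unitary.conjStarAlgAut_apply (S := 𝕜), eigenbasisAlignment, hB.cfc_eq, IsHermitian.cfc,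
    ← Unitary.conjStarAlgAut_mul_apply, mul_assoc, Unitary.star_mul_self, mul_one]

lemma commute_conjugate_eigenbasisAlignment (hA : A.IsHermitian) (hB : B.IsHermitian) :
    Commute A (eigenbasisAlignment hA hB * B *
      star (eigenbasisAlignment hA hB : Matrix n n 𝕜)) := by
  have hconj := conjugate_eigenbasisAlignment_cfc hA hB id
  rw [cfc_id ℝ B] at hconj
  have hcomm := (commute_diagonal (RCLike.ofReal ∘ hA.eigenvalues)
    (RCLike.ofReal ∘ hB.eigenvalues)).map (Unitary.conjStarAlgAut 𝕜 _ hA.eigenvectorUnitary)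
  rwa [← hA.spectral_theorem, ← Function.id_comp hB.eigenvalues, ← hconj] at hcomm

lemma re_trace_cfc_mul_conjugate_eigenbasisAlignment_cfc (hA : A.IsHermitian)
    (hB : B.IsHermitian) (f g : ℝ → ℝ) :
    RCLike.re (cfc f A * (eigenbasisAlignment hA hB * cfc g B *
      star (eigenbasisAlignment hA hB : Matrix n n 𝕜))).trace =
        ∑ i, f (hA.eigenvalues i) * g (hB.eigenvalues i) := by
  rw [conjugate_eigenbasisAlignment_cfc, hA.cfc_eq, IsHermitian.cfc, ← map_mul,
    diagonal_mul_diagonal, Unitary.conjStarAlgAut_apply, trace_mul_cycle, Unitary.coe_star_mul_self,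
    one_mul, trace_diagonal, map_sum]
  simp only [Function.comp_apply, ← RCLike.ofReal_mul, RCLike.ofReal_re]

end SpectralTrace

section FirstVariation

lemma hasDerivAt_exp_smul_mul_exp_neg_smul {A : Type*} [NormedRing A] [NormedAlgebra ℝ A]
    [CompleteSpace A] (k a : A) :
    HasDerivAt (fun t : ℝ => NormedSpace.exp (t • k) * a * NormedSpace.exp (t • -k))
      (k * a - a * k) 0 := by
  have hexp (x : A) : HasDerivAt (fun t : ℝ => NormedSpace.exp (t • x)) x 0 := by
    simpa using hasDerivAt_exp_smul_const (𝕂 := ℝ) x (0 : ℝ)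
  refine (((hexp k).mul_const a).mul (hexp (-k))).congr_deriv ?_
  simp [sub_eq_add_neg]

variable {n 𝕜 : Type*} [Fintype n] [RCLike 𝕜] {A C K : Matrix n n 𝕜}

lemma eq_zero_of_re_trace_star_mul_self_eq_zero (h : RCLike.re (star K * K).trace = 0) :
    K = 0 := by
  have hreal : RCLike.im (star K * K).trace = 0 :=
    (RCLike.nonneg_iff.mp (posSemidef_conjTranspose_mul_self K).trace_nonneg).2
  exact trace_conjTranspose_mul_self_eq_zero_iff.mp
    (RCLike.ext (h.trans (map_zero _).symm) (hreal.trans (map_zero _).symm))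

variable [DecidableEq n]

lemma exp_smul_mem_unitaryGroup (hK : star K = -K) (t : ℝ) :
    NormedSpace.exp (t • K) ∈ unitaryGroup n 𝕜 := by
  rw [mem_unitaryGroup_iff, star_eq_conjTranspose, ← exp_conjTranspose, ← star_eq_conjTranspose,
    star_smul, hK, ← exp_add_of_commute]
  · simp
  · simp [Commute, SemiconjBy]

open scoped Matrix.Norms.Operator in
lemma re_trace_mul_commutator_eq_zero_of_forall_le (hK : star K = -K)
    (h : ∀ V ∈ unitaryGroup n 𝕜,
      RCLike.re (C * A).trace ≤ RCLike.re (C * (V * A * star V)).trace) :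
    RCLike.re (C * (K * A - A * K)).trace = 0 := by
  let L : Matrix n n 𝕜 →L[ℝ] ℝ := LinearMap.toContinuousLinearMap
    (RCLike.reLm ∘ₗ (traceLinearMap n 𝕜 𝕜).restrictScalars ℝ ∘ₗ LinearMap.mulLeft ℝ C)
  have hderiv := L.hasFDerivAt.comp_hasDerivAt (0 : ℝ) (hasDerivAt_exp_smul_mul_exp_neg_smul K A)
  refine IsLocalMin.hasDerivAt_eq_zero (.of_forall fun t => ?_) hderiv
  have hstar : star (NormedSpace.exp (t • K)) = NormedSpace.exp (t • -K) := by
    rw [star_eq_conjTranspose, ← exp_conjTranspose, ← star_eq_conjTranspose, star_smul, hK,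
      star_trivial]
  have hle := h _ (exp_smul_mem_unitaryGroup hK t)
  rw [hstar] at hle
  have hL (M : Matrix n n 𝕜) : L M = RCLike.re (C * M).trace := rfl
  simp only [Function.comp_apply, hL, zero_smul, NormedSpace.exp_zero, one_mul, mul_one]
  exact hle

lemma commute_of_forall_re_trace_mul_le (hC : C.IsHermitian) (hA : A.IsHermitian)
    (h : ∀ V ∈ unitaryGroup n 𝕜,
      RCLike.re (C * A).trace ≤ RCLike.re (C * (V * A * star V)).trace) :
    Commute C A := by
  -- Moving `A` along `exp (t • K)` has initial velocity `K * A - A * K`, and pairing this with `C`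
  -- gives the squared Hilbert–Schmidt norm of `K`.
  set K := C * A - A * C with hK_def
  have hK : star K = -K := by
    simp only [hK_def, star_sub, star_mul, star_eq_conjTranspose, hC.eq, hA.eq, neg_sub]
  have htrace : (star K * K).trace = (C * (K * A - A * K)).trace := calc
    (star K * K).trace = (A * C * K).trace - (C * A * K).trace := by
      rw [hK, ← trace_sub, ← sub_mul, hK_def, neg_sub]
    _ = (C * (K * A - A * K)).trace := by
      rw [mul_sub C, trace_sub, mul_assoc A, trace_mul_comm A]; simp only [mul_assoc]
  exact sub_eq_zero.mp <| eq_zero_of_re_trace_star_mul_self_eq_zero <|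
    htrace ▸ re_trace_mul_commutator_eq_zero_of_forall_le hK h

end FirstVariation

section UnitaryMinimizer

lemma isCompact_unitaryGroup {n 𝕜 : Type*} [Fintype n] [DecidableEq n] [RCLike 𝕜] :
    IsCompact (unitaryGroup n 𝕜 : Set (Matrix n n 𝕜)) := by
  have hball : IsCompact {U : Matrix n n 𝕜 | ∀ i j, U i j ∈ Metric.closedBall (0 : 𝕜) 1} :=
    isCompact_pi_infinite (X := fun _ : n => n → 𝕜)
      (s := fun _ => {v : n → 𝕜 | ∀ j, v j ∈ Metric.closedBall (0 : 𝕜) 1}) fun _ =>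
      isCompact_pi_infinite (X := fun _ : n => 𝕜) fun _ => isCompact_closedBall 0 1
  exact IsCompact.of_isClosed_subset (X := Matrix n n 𝕜) hball isClosed_unitary fun U hU i j => by
    simpa using entry_norm_bound_of_unitary hU i j

open scoped MatrixOrder

variable {n : Type*} [Fintype n] [DecidableEq n] {A S ρ σ : Matrix n n ℂ} {α z : ℝ}

open scoped Matrix.Norms.L2Operator in
lemma exists_forall_re_trace_rpow_conjugate_le (hA : 0 ≤ A) (hS : IsSelfAdjoint S) (hz : 0 ≤ z) :
    ∃ U ∈ unitaryGroup n ℂ, ∀ V ∈ unitaryGroup n ℂ,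
      ((S * (U * A * star U) * S) ^ z).trace.re ≤ ((S * (V * A * star V) * S) ^ z).trace.re := by
  have hmaps : Set.MapsTo (fun V => S * (V * A * star V) * S) (unitaryGroup n ℂ)
      (Set.Ici (0 : Matrix n n ℂ)) := fun V _ =>
    hS.conjugate_nonneg (star_right_conjugate_nonneg hA V)
  have hcont : ContinuousOn (fun V => S * (V * A * star V) * S)
      (unitaryGroup n ℂ : Set (Matrix n n ℂ)) := by fun_prop
  exact isCompact_unitaryGroup.exists_isMinOn ⟨1, one_mem _⟩ <|
    (Complex.continuous_re.comp continuous_id.matrix_trace).comp_continuousOn <|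
      (continuousOn_rpow_const hz).comp hcont hmaps

lemma commute_of_forall_re_trace_rpow_conjugate_le (hA : A.PosDef) (hS : S.PosDef)
    (hz : z ∈ Set.Ioc 0 1)
    (h : ∀ V ∈ unitaryGroup n ℂ,
      ((S * A * S) ^ z).trace.re ≤ ((S * (V * A * star V) * S) ^ z).trace.re) :
    Commute S A := by
  have hX : IsStrictlyPositive (S * A * S) :=
    hA.isStrictlyPositive.conjugate_of_isUnit_of_isSelfAdjoint A S hS.isUnit hS.isHermitian
  set W := (S * A * S) ^ (z - 1)
  have hW : IsSelfAdjoint (S * W * S) :=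
    (hS.isHermitian.isSelfAdjoint.conjugate_nonneg CFC.rpow_nonneg).isSelfAdjoint
  have hcyc (B : Matrix n n ℂ) : (S * W * S * B).trace = (W * (S * B * S)).trace := by
    rw [mul_assoc, mul_assoc, trace_mul_comm]
    simp only [mul_assoc]
  refine commute_of_commute_conjugate_rpow_sub_one hz.1.ne' hS.isStrictlyPositive
    hA.isStrictlyPositive <| commute_of_forall_re_trace_mul_le hW hA.isHermitian fun V hV => ?_
  have hY : 0 ≤ S * (V * A * star V) * S :=
    hS.isHermitian.isSelfAdjoint.conjugate_nonneg
      (star_right_conjugate_nonneg hA.posSemidef.nonneg V)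
  have hklein := (h V hV).trans <|
    re_trace_rpow_le (isStrictlyPositive_iff_posDef.mp hX) hY.posSemidef ⟨hz.1.le, hz.2⟩
  rw [hcyc, hcyc, rpow_sub_one_mul_self hX]
  refine le_of_mul_le_mul_left ?_ hz.1
  simp only [RCLike.re_eq_complex_re] at hklein ⊢
  linarith

lemma exists_commute_forall_re_trace_rpow_conjugate_le (hA : A.PosDef) (hS : S.PosDef)
    (hz : z ∈ Set.Ioc 0 1) :
    ∃ U ∈ unitaryGroup n ℂ, Commute S (U * A * star U) ∧ ∀ V ∈ unitaryGroup n ℂ,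
      ((S * (U * A * star U) * S) ^ z).trace.re ≤ ((S * (V * A * star V) * S) ^ z).trace.re := by
  obtain ⟨U, hU, hmin⟩ :=
    exists_forall_re_trace_rpow_conjugate_le hA.posSemidef.nonneg hS.isHermitian hz.1.le
  refine ⟨U, hU, commute_of_forall_re_trace_rpow_conjugate_le
    (posDef_conjugate_unitary hU hA) hS hz fun V hV => ?_, hmin⟩
  simpa only [star_mul, mul_assoc] using hmin (V * U) (mul_mem hV hU)

lemma sum_eigenvalues_rpow_le_re_trace_rpow_mul_rpow (hρ : ρ.PosDef) (hσ : σ.PosDef) (hα : 1 ≤ α) :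
    ∑ i, hρ.1.eigenvalues i ^ α * hσ.1.eigenvalues i ^ (1 - α) ≤
      (ρ ^ α * σ ^ (1 - α)).trace.re := by
  have hα0 : 0 ≤ α := by linarith
  rw [CFC.rpow_eq_cfc_real hρ.posSemidef.nonneg, CFC.rpow_eq_cfc_real hσ.posSemidef.nonneg]
  refine sum_mul_eigenvalues_le_re_trace_cfc_mul_cfc (f := (· ^ α)) (g := (· ^ (1 - α)))
    hρ.1 hσ.1 ?_ ?_
  · exact fun x hx y _ hxy =>
      Real.rpow_le_rpow (hρ.isStrictlyPositive.spectrum_pos hx).le hxy hα0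
  · exact fun x hx y _ hxy => Real.rpow_le_rpow_of_nonpos
      (hσ.isStrictlyPositive.spectrum_pos hx) hxy (sub_nonpos.mpr hα)

open scoped Matrix.Norms.L2Operator in
lemma sum_eigenvalues_rpow_le_re_trace_conjugate_rpow (hρ : ρ.PosDef) (hσ : σ.PosDef)
    (hα : 1 ≤ α) (hz : z ∈ Set.Ioc 0 1) :
    ∑ i, hρ.1.eigenvalues i ^ α * hσ.1.eigenvalues i ^ (1 - α) ≤
      ((σ ^ ((1 - α) / (2 * z)) * ρ ^ (α / z) * σ ^ ((1 - α) / (2 * z))) ^ z).trace.re := by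
  obtain ⟨U, hU, hcomm, hmin⟩ := exists_commute_forall_re_trace_rpow_conjugate_le
    (posDef_rpow hρ (α / z)) (posDef_rpow hσ ((1 - α) / (2 * z))) hz
  have hUρ : (U * ρ * star U).PosDef := posDef_conjugate_unitary hU hρ
  rw [← conjugate_unitary_rpow hU hρ.isStrictlyPositive] at hcomm hmin
  have hone := hmin 1 (one_mem _)
  simp only [one_mul, star_one, mul_one] at hone
  refine le_trans ?_ hone
  rw [conjugate_rpow_div_rpow_of_commute hσ.isStrictlyPositive hUρ.isStrictlyPositive hz.1.ne'
    hcomm, trace_mul_comm, ← eigenvalues_conjugate_unitary hρ.1 hU hUρ.1]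
  exact sum_eigenvalues_rpow_le_re_trace_rpow_mul_rpow hUρ hσ hα

end UnitaryMinimizer

section Fidelity

open scoped MatrixOrder

variable {d : ℕ} {ρ σ U : Matrix (Fin d) (Fin d) ℂ} {α z : ℝ}

lemma mpow_eq_rpow {A : Matrix (Fin d) (Fin d) ℂ} (hA : 0 ≤ A) (t : ℝ) : mpow A t = A ^ t := by
  rw [mpow, dif_pos hA.posSemidef.1, CFC.rpow_eq_cfc_real hA, hA.posSemidef.1.cfc_eq]
  rfl

lemma Faz_eq_re_trace_rpow (hρ : 0 ≤ ρ) (hσ : 0 ≤ σ) (α z : ℝ) :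
    Faz ρ σ α z = ((σ ^ ((1 - α) / (2 * z)) * ρ ^ (α / z) *
      σ ^ ((1 - α) / (2 * z))) ^ z).trace.re ^ (1 / α) := by
  rw [Faz, mpow_eq_rpow hρ, mpow_eq_rpow hσ, mpow_eq_rpow]
  exact CFC.rpow_nonneg.isSelfAdjoint.conjugate_nonneg CFC.rpow_nonneg

lemma exists_perm_forall_eigDown_eq (d : ℕ) :
    ∃ e : Equiv.Perm (Fin d), ∀ {A : Matrix (Fin d) (Fin d) ℂ} (hA : A.IsHermitian),
      eigDown hA = hA.eigenvalues ∘ e := by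
  refine ⟨(finCongr (Fintype.card_fin d).symm).trans
    (Fintype.equivOfCardEq (Fintype.card_fin _)), fun {A} hA => ?_⟩
  refine Tuple.unique_antitone (σ := Fin.revPerm.trans (Tuple.sort hA.eigenvalues)) ?_ ?_
  · exact (Tuple.monotone_sort hA.eigenvalues).comp_antitone Fin.rev_anti
  · intro i j hij
    simpa [IsHermitian.eigenvalues] using hA.eigenvalues₀_antitone hij

lemma FazC_eigDown (hρ : ρ.IsHermitian) (hσ : σ.IsHermitian) (α : ℝ) :
    FazC (eigDown hρ) (eigDown hσ) α =
      (∑ i, hρ.eigenvalues i ^ α * hσ.eigenvalues i ^ (1 - α)) ^ (1 / α) := by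
  obtain ⟨e, he⟩ := exists_perm_forall_eigDown_eq d
  rw [he, he, FazC]
  exact congr_arg (· ^ (1 / α)) <|
    Equiv.sum_comp e fun i => hρ.eigenvalues i ^ α * hσ.eigenvalues i ^ (1 - α)

lemma FazC_eigDown_le_Faz (hρ : ρ.PosDef) (hσ : σ.PosDef) (hα : 1 ≤ α) (hz : z ∈ Set.Ioc 0 1) :
    FazC (eigDown hρ.1) (eigDown hσ.1) α ≤ Faz ρ σ α z := by
  rw [FazC_eigDown, Faz_eq_re_trace_rpow hρ.posSemidef.nonneg hσ.posSemidef.nonneg]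
  have hsum : 0 ≤ ∑ i, hρ.1.eigenvalues i ^ α * hσ.1.eigenvalues i ^ (1 - α) :=
    Finset.sum_nonneg fun i _ => mul_nonneg (Real.rpow_nonneg (hρ.eigenvalues_pos i).le _)
      (Real.rpow_nonneg (hσ.eigenvalues_pos i).le _)
  exact Real.rpow_le_rpow hsum (sum_eigenvalues_rpow_le_re_trace_conjugate_rpow hρ hσ hα hz)
    (by positivity)

lemma eigDown_conjugate_unitary (hσ : σ.IsHermitian) (hU : U ∈ unitaryGroup (Fin d) ℂ)
    (h : (U * σ * star U).IsHermitian) : eigDown h = eigDown hσ := by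
  rw [eigDown, eigenvalues_conjugate_unitary hσ hU, eigDown]

open scoped Matrix.Norms.L2Operator in
lemma Faz_of_commute (hρ : ρ.PosDef) (hσ : σ.PosDef) (hz : z ≠ 0) (h : Commute ρ σ) :
    Faz ρ σ α z = (ρ ^ α * σ ^ (1 - α)).trace.re ^ (1 / α) := by
  have hcomm : Commute (σ ^ ((1 - α) / (2 * z))) (ρ ^ (α / z)) :=
    (h.cfc_nnreal _).symm.cfc_nnreal _
  rw [Faz_eq_re_trace_rpow hρ.posSemidef.nonneg hσ.posSemidef.nonneg, trace_mul_comm,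
    conjugate_rpow_div_rpow_of_commute hσ.isStrictlyPositive hρ.isStrictlyPositive hz hcomm]

lemma Faz_conjugate_eigenbasisAlignment (hρ : ρ.PosDef) (hσ : σ.PosDef) (hz : z ≠ 0) :
    Faz ρ (eigenbasisAlignment hρ.1 hσ.1 * σ *
      star (eigenbasisAlignment hρ.1 hσ.1 : Matrix (Fin d) (Fin d) ℂ)) α z =
        FazC (eigDown hρ.1) (eigDown hσ.1) α := by
  have hU := (eigenbasisAlignment hρ.1 hσ.1).2
  rw [Faz_of_commute hρ (posDef_conjugate_unitary hU hσ) hz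
    (commute_conjugate_eigenbasisAlignment hρ.1 hσ.1), conjugate_unitary_rpow hU
    hσ.isStrictlyPositive, CFC.rpow_eq_cfc_real hρ.posSemidef.nonneg,
    CFC.rpow_eq_cfc_real hσ.posSemidef.nonneg, FazC_eigDown]
  exact congr_arg (· ^ (1 / α))
    (re_trace_cfc_mul_conjugate_eigenbasisAlignment_cfc hρ.1 hσ.1 (· ^ α) (· ^ (1 - α)))

theorem stmt_3_general (hρ : ρ.PosDef) (hσ : σ.PosDef) (hα : 1 ≤ α) (hz : z ∈ Set.Ioc 0 1) :
    IsLeast {x : ℝ | ∃ U ∈ unitaryGroup (Fin d) ℂ, x = Faz ρ (U * σ * star U) α z}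
      (FazC (eigDown hρ.1) (eigDown hσ.1) α) := by
  constructor
  · exact ⟨_, (eigenbasisAlignment hρ.1 hσ.1).2,
      (Faz_conjugate_eigenbasisAlignment hρ hσ hz.1.ne').symm⟩
  · rintro _ ⟨U, hU, rfl⟩
    have hUσ : (U * σ * star U).PosDef := posDef_conjugate_unitary hU hσ
    rw [← eigDown_conjugate_unitary hσ.1 hU hUσ.1]
    exact FazC_eigDown_le_Faz hρ hUσ hα hz

end Fidelity

/-- for positive definite density matrices `ρ, σ`, `α ∈ (1,∞)` and `z ∈ (0,1)`,
the minimum of `F_{α,z}(ρ, UσU*)` over unitaries `U` is `F_α^C(λ↓(ρ), λ↓(σ))`, attained. -/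
theorem stmt_3 {d : ℕ} (ρ σ : Matrix (Fin d) (Fin d) ℂ)
    (hρ : ρ.PosDef) (hσ : σ.PosDef) (hρ1 : ρ.trace = 1) (hσ1 : σ.trace = 1)
    (α z : ℝ) (hα : 1 < α) (hz : z ∈ Set.Ioo (0 : ℝ) 1) :
    IsLeast {x : ℝ | ∃ U ∈ Matrix.unitaryGroup (Fin d) ℂ,
        x = Faz ρ (U * σ * star U) α z}
      (FazC (eigDown hρ.1) (eigDown hσ.1) α) := by
  exact stmt_3_general hρ hσ hα.le (Set.Ioo_subset_Ioc_self hz)
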